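/- Let K ⊂ ℝⁿ be compact, let H : ℝ × K → ℝⁿ be RAP in t uniformly with respect to x ∈ K, and suppose H is Lipschitz in x uniformly in t: there is L ≥ 0 with ‖H(t,x) − H(t,y)‖ ≤ L‖x − y‖ for all t ∈ ℝ and x, y ∈ K. Let φ : ℝ → K be RAP. Then the function t ↦ H(t, φ(t)) is RAP. -/

import Mathlib

open MeasureTheory Filter

def RelativelyDense (S : Set ℝ) : Prop :=
  ∃ l > 0, ∀ a : ℝ, ∃ τ ∈ S, τ ∈ Set.Icc a (a + l)

def RAP {E : Type*} [NormedAddCommGroup E] (f : ℝ → E) : Prop :=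
  (∃ C, ∀ t, ‖f t‖ ≤ C) ∧ UniformContinuous f ∧
  ∀ ε > 0, RelativelyDense
    {τ | Filter.limsup (fun t => ‖f (t + τ) - f t‖) (Filter.cocompact ℝ) < ε}

def RAPUniform {E F : Type*} [NormedAddCommGroup E] [NormedAddCommGroup F]
    (f : ℝ → E → F) (S : Set E) : Prop :=
  (∃ C, ∀ t, ∀ x ∈ S, ‖f t x‖ ≤ C) ∧
  UniformContinuousOn (fun p : ℝ × E => f p.1 p.2) (Set.univ ×ˢ S) ∧
  ∀ ε > 0, RelativelyDense
    {τ | Filter.limsup (fun t => ⨆ x ∈ S, ‖f (t + τ) x - f t x‖) (Filter.cocompact ℝ) < ε}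

theorem RelativelyDense.mono' {A B : Set ℝ} (h : RelativelyDense A) (hAB : A ⊆ B) :
    RelativelyDense B := by
  obtain ⟨l, hl, h⟩ := h
  refine ⟨l, hl, fun a => ?_⟩
  obtain ⟨τ, h1, h2⟩ := h a
  exact ⟨τ, hAB h1, h2⟩

theorem RelativelyDense.common {A B A' B' : Set ℝ} (hA : RelativelyDense A)
    (hB : RelativelyDense B) {δ : ℝ} (hδ : 0 < δ)
    (h1 : ∀ τ ∈ A, ∀ σ ∈ A, τ - σ ∈ A')
    (h2 : ∀ τ ∈ B, ∀ σ ∈ B, ∀ η, |η| < δ → τ - σ + η ∈ B') :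
    RelativelyDense (A' ∩ B') := by
  obtain ⟨l1, hl1, hA⟩ := hA
  obtain ⟨l2, hl2, hB⟩ := hB
  let D : Set ℝ := {d | (∃ τ ∈ A, ∃ σ ∈ B, d = τ - σ) ∧ d ∈ Set.Icc (-(l1 + l2)) (l1 + l2)}
  have hD : TotallyBounded D :=
    (isCompact_Icc (a := -(l1 + l2)) (b := l1 + l2)).totallyBounded.subset (fun d hd => hd.2)
  obtain ⟨t, htD, htf, hcov⟩ := (totallyBounded_iff_subset.1 hD) _ (Metric.dist_mem_uniformity hδ)
  have hch : ∀ d : ℝ, ∃ τ, d ∈ t → τ ∈ A ∧ ∃ σ ∈ B, d = τ - σ := by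
    intro d
    by_cases hd : d ∈ t
    · obtain ⟨⟨τ, hτ, h⟩, -⟩ := htD hd
      exact ⟨τ, fun _ => ⟨hτ, h⟩⟩
    · exact ⟨0, fun h => absurd h hd⟩
  choose T hT using hch
  obtain ⟨M, hM⟩ := (htf.image (fun d => |T d|)).bddAbove
  have hM' : ∀ d ∈ t, |T d| ≤ max M 0 := fun d hd =>
    (hM (Set.mem_image_of_mem _ hd)).trans (le_max_left _ _)
  have hM0 : 0 ≤ max M 0 := le_max_right _ _
  generalize max M 0 = R at hM' hM0
  refine ⟨2 * R + l1, by positivity, fun a => ?_⟩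
  obtain ⟨τ, hτ, hτa⟩ := hA (a + R)
  obtain ⟨σ, hσ, hσa⟩ := hB (a + R)
  rw [Set.mem_Icc] at hτa hσa
  have hd : τ - σ ∈ D := ⟨⟨τ, hτ, σ, hσ, rfl⟩, by constructor <;> linarith⟩
  have := hcov hd
  simp only [Set.mem_iUnion] at this
  obtain ⟨d, hdt, hdd⟩ := this
  obtain ⟨hTA, σ', hσ', hde⟩ := hT d hdt
  have hlt : |(τ - σ) - d| < δ := by simpa [Real.dist_eq] using hdd
  have hb := abs_le.1 (hM' d hdt)
  refine ⟨τ - T d, ⟨h1 _ hτ _ hTA, ?_⟩, by constructor <;> linarith⟩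
  have := h2 σ hσ σ' hσ' _ hlt
  convert this using 1
  linarith

theorem tendsto_add_cocompact' (s : ℝ) :
    Tendsto (fun t : ℝ => t + s) (cocompact ℝ) (cocompact ℝ) :=
  (Homeomorph.addRight s).isClosedEmbedding.tendsto_cocompact

/-- composition of an RAP function with a function RAP in `t`
uniformly (and Lipschitz in `x`) is RAP. -/
theorem RAP_comp {n : ℕ} (K : Set (EuclideanSpace ℝ (Fin n))) (hK : IsCompact K)
    (H : ℝ → EuclideanSpace ℝ (Fin n) → EuclideanSpace ℝ (Fin n))
    (hH : RAPUniform H K)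
    (L : ℝ) (hL : 0 ≤ L)
    (hlip : ∀ t : ℝ, ∀ x ∈ K, ∀ y ∈ K, ‖H t x - H t y‖ ≤ L * ‖x - y‖)
    (φ : ℝ → EuclideanSpace ℝ (Fin n)) (hφ : RAP φ) (hφK : ∀ t, φ t ∈ K) :
    RAP (fun t => H t (φ t)) := by
  obtain ⟨⟨C, hC⟩, hHu, hHr⟩ := hH
  obtain ⟨⟨C', hC'⟩, hφu, hφr⟩ := hφ
  refine ⟨⟨C, fun t => hC t _ (hφK t)⟩, ?_, ?_⟩
  · have h1 : UniformContinuous (fun t : ℝ => (t, φ t)) := uniformContinuous_id.prodMk hφu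
    rw [← uniformContinuousOn_univ] at h1 ⊢
    exact hHu.comp h1 (fun t _ => ⟨trivial, hφK t⟩)
  intro ε hε
  have hC0 : 0 ≤ C := (norm_nonneg _).trans (hC 0 _ (hφK 0))
  obtain ⟨e1, he1, he1'⟩ : ∃ e1 > 0, e1 = ε / 8 := ⟨_, by positivity, rfl⟩
  obtain ⟨e2, he2, he2'⟩ : ∃ e2 > 0, L * (3 * e2) ≤ ε / 4 := by
    refine ⟨ε / (12 * (L + 1)), by positivity, ?_⟩
    have : L * (3 * (ε / (12 * (L + 1)))) = ε / 4 * (L / (L + 1)) := by field_simp; ring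
    rw [this]
    have h : L / (L + 1) ≤ 1 := by rw [div_le_one (by positivity)]; linarith
    nlinarith
  have hA : RelativelyDense
      {τ | ∀ᶠ t in cocompact ℝ, ∀ x ∈ K, ‖H (t + τ) x - H t x‖ < e1} := by
    refine (hHr e1 he1).mono' fun τ hτ => ?_
    have hin : ∀ t x, x ∈ K → ‖H (t + τ) x - H t x‖ ≤ 2 * C := fun t x hx =>
      (norm_sub_le _ _).trans (by linarith [hC t x hx, hC (t + τ) x hx])
    have hin' : ∀ t x, (⨆ (_ : x ∈ K), ‖H (t + τ) x - H t x‖) ≤ 2 * C := fun t x =>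
      Real.iSup_le (hin t x) (by positivity)
    have hbd : IsBoundedUnder (· ≤ ·) (cocompact ℝ)
        (fun t => ⨆ x ∈ K, ‖H (t + τ) x - H t x‖) :=
      isBoundedUnder_of ⟨2 * C, fun t => Real.iSup_le (hin' t) (by positivity)⟩
    rw [Set.mem_setOf_eq] at hτ ⊢
    have hev := eventually_lt_of_limsup_lt hτ hbd
    filter_upwards [hev] with t ht x hx
    refine lt_of_le_of_lt ?_ ht
    have := le_ciSup (f := fun x => ⨆ (_ : x ∈ K), ‖H (t + τ) x - H t x‖)
      ⟨2 * C, by rintro _ ⟨y, rfl⟩; exact hin' t y⟩ x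
    simpa [hx] using this
  have hB : RelativelyDense {τ | ∀ᶠ t in cocompact ℝ, ‖φ (t + τ) - φ t‖ < e2} := by
    refine (hφr e2 he2).mono' fun τ hτ => ?_
    rw [Set.mem_setOf_eq] at hτ ⊢
    refine eventually_lt_of_limsup_lt hτ (isBoundedUnder_of ⟨2 * C', fun t => ?_⟩)
    exact (norm_sub_le _ _).trans (by linarith [hC' t, hC' (t + τ)])
  obtain ⟨δ, hδ, hφδ⟩ := Metric.uniformContinuous_iff.1 hφu e2 he2
  refine (hA.common (A' := {τ | ∀ᶠ t in cocompact ℝ, ∀ x ∈ K, ‖H (t + τ) x - H t x‖ < 2 * e1})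
    (B' := {τ | ∀ᶠ t in cocompact ℝ, ‖φ (t + τ) - φ t‖ < 3 * e2}) hB hδ ?_ ?_).mono' ?_
  · intro τ hτ σ hσ
    have h1 := (tendsto_add_cocompact' (-σ)).eventually hτ
    have h2 := (tendsto_add_cocompact' (-σ)).eventually hσ
    filter_upwards [h1, h2] with t h1 h2 x hx
    have h1 := h1 x hx
    have h2 := h2 x hx
    rw [neg_add_cancel_right] at h2
    rw [show t + -σ + τ = t + (τ - σ) by ring] at h1
    rw [norm_sub_rev] at h2
    linarith [norm_sub_le_norm_sub_add_norm_sub (H (t + (τ - σ)) x) (H (t + -σ) x) (H t x)]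
  · intro τ hτ σ hσ η hη
    have h1 := (tendsto_add_cocompact' (-σ)).eventually hτ
    have h2 := (tendsto_add_cocompact' (-σ)).eventually hσ
    filter_upwards [h1, h2] with t h1 h2
    rw [neg_add_cancel_right] at h2
    rw [show t + -σ + τ = t + (τ - σ) by ring] at h1
    rw [norm_sub_rev] at h2
    have h3 := @hφδ (t + (τ - σ + η)) (t + (τ - σ)) (by
      rw [Real.dist_eq]; convert hη using 2; ring)
    rw [dist_eq_norm] at h3
    linarith [norm_sub_le_norm_sub_add_norm_sub (φ (t + (τ - σ))) (φ (t + -σ)) (φ t),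
      norm_sub_le_norm_sub_add_norm_sub (φ (t + (τ - σ + η))) (φ (t + (τ - σ))) (φ t)]
  · rintro τ ⟨h1, h2⟩
    have key : ∀ᶠ t in cocompact ℝ, ‖H (t + τ) (φ (t + τ)) - H t (φ t)‖ ≤ ε / 2 := by
      filter_upwards [h1, h2] with t h1 h2
      have h3 := h1 _ (hφK t)
      have h4 := hlip (t + τ) _ (hφK (t + τ)) _ (hφK t)
      have h5 := mul_le_mul_of_nonneg_left h2.le hL
      linarith [norm_sub_le_norm_sub_add_norm_sub (H (t + τ) (φ (t + τ)))
        (H (t + τ) (φ t)) (H t (φ t))]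
    refine lt_of_le_of_lt (limsup_le_of_le ?_ key) (by linarith)
    exact IsBoundedUnder.isCoboundedUnder_le
      (isBoundedUnder_of ⟨0, fun t => norm_nonneg _⟩)
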